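/- arXiv:1708.04579 — 2 statements merged into one kernel-verified Lean document; each statement's English description precedes it below -/
import Mathlib

section
/- For n = 2: every integrally convex function f : ℤ² → ℝ ∪ {+∞} whose effective domain is a discrete midpoint convex set is locally discrete midpoint convex. -/
/-- The ℓ∞-norm of an integer vector, as a natural number. -/
def linf {n : ℕ} (z : Fin n → ℤ) : ℕ :=
  Finset.univ.sup fun i => (z i).natAbs

/-- Componentwise round-up of (x+y)/2. -/
def avgUp {n : ℕ} (x y : Fin n → ℤ) : Fin n → ℤ :=
  fun i => ⌈((x i + y i : ℚ)) / 2⌉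

/-- Componentwise round-down of (x+y)/2. -/
def avgDown {n : ℕ} (x y : Fin n → ℤ) : Fin n → ℤ :=
  fun i => ⌊((x i + y i : ℚ)) / 2⌋

/-- A set `S ⊆ ℤⁿ` is discrete midpoint convex. -/
def DMCSet {n : ℕ} (S : Set (Fin n → ℤ)) : Prop :=
  ∀ ⦃x⦄, x ∈ S → ∀ ⦃y⦄, y ∈ S → 2 ≤ linf (x - y) →
    avgUp x y ∈ S ∧ avgDown x y ∈ S

/-- `f` satisfies discrete midpoint convexity for the pair `(x, y)`.
Values are in `ℝ ∪ {+∞}`, modeled as `EReal` together with the hypothesis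
that `f` never takes the value `⊥`. -/
def DMCPair {n : ℕ} (f : (Fin n → ℤ) → EReal) (x y : Fin n → ℤ) : Prop :=
  f (avgUp x y) + f (avgDown x y) ≤ f x + f y

/-- `f` is globally discrete midpoint convex. -/
def GloballyDMC {n : ℕ} (f : (Fin n → ℤ) → EReal) : Prop :=
  ∀ x y : Fin n → ℤ, 2 ≤ linf (x - y) → DMCPair f x y

/-- The effective domain of `f`. -/
def effDom {n : ℕ} (f : (Fin n → ℤ) → EReal) : Set (Fin n → ℤ) :=
  {x | f x ≠ ⊤}

/-- `f` is locally discrete midpoint convex. -/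
def LocallyDMC {n : ℕ} (f : (Fin n → ℤ) → EReal) : Prop :=
  DMCSet (effDom f) ∧ ∀ x y : Fin n → ℤ, linf (x - y) = 2 → DMCPair f x y

/-- The integral neighborhood of a real point. -/
def intNbhd {n : ℕ} (x : Fin n → ℝ) : Set (Fin n → ℤ) :=
  {z | ∀ i, |x i - (z i : ℝ)| < 1}

/-- The local convex envelope `f̃` of `f`: at `x ∈ ℝⁿ`, the infimum of
`Σ_z λ_z f(z)` over convex combinations `x = Σ_z λ_z z` of points `z` of the
integral neighborhood `N(x)`. -/
noncomputable def envelope {n : ℕ} (f : (Fin n → ℤ) → EReal)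
    (x : Fin n → ℝ) : EReal :=
  sInf { v : EReal | ∃ (t : Finset (Fin n → ℤ)) (lam : (Fin n → ℤ) → ℝ),
    (∀ z ∈ t, z ∈ intNbhd x) ∧ (∀ z ∈ t, 0 ≤ lam z) ∧
    (∑ z ∈ t, lam z) = 1 ∧
    (∀ i, (∑ z ∈ t, lam z * (z i : ℝ)) = x i) ∧
    v = ∑ z ∈ t, ((lam z : EReal) * f z) }

/-- `f` is integrally convex: its local convex envelope is convex on `ℝⁿ`. -/
def IntegrallyConvexFn {n : ℕ} (f : (Fin n → ℤ) → EReal) : Prop :=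
  ∀ (u v : Fin n → ℝ) (a b : ℝ), 0 ≤ a → 0 ≤ b → a + b = 1 →
    envelope f (a • u + b • v) ≤ (a : EReal) * envelope f u + (b : EReal) * envelope f v

/-! Every coordinate of a point in the integral neighborhood of the midpoint `m` of `x` and `y` is
a coordinate of `avgUp x y` or of `avgDown x y`. If at most one coordinate of `x - y` is
odd, then no mixing can occur, so the neighborhood is `{avgUp x y, avgDown x y}` and
`f̃(m) ≥ (f(avgUp x y) + f(avgDown x y)) / 2`. Convexity of `f̃` gives
`f̃(m) ≤ (f(x) + f(y)) / 2`. In the plane, `‖x - y‖∞ = 2` makes one of the two coordinates of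
`x - y` equal to `±2`, leaving at most one odd one. -/

section Rounding

variable {n : ℕ} {x y z : Fin n → ℤ}

theorem avgUp_apply (x y : Fin n → ℤ) (i : Fin n) : avgUp x y i = -(-(x i + y i) / 2) := by
  simpa [avgUp] using Rat.ceil_intCast_div_natCast (x i + y i) 2

theorem avgDown_apply (x y : Fin n → ℤ) (i : Fin n) : avgDown x y i = (x i + y i) / 2 := by
  simpa [avgDown] using Rat.floor_intCast_div_natCast (x i + y i) 2

theorem avgUp_apply_add_avgDown_apply (x y : Fin n → ℤ) (i : Fin n) :
    avgUp x y i + avgDown x y i = x i + y i := by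
  rw [avgUp_apply, avgDown_apply]
  omega

theorem avgUp_apply_eq_avgDown_apply {i : Fin n} (h : Even (x i - y i)) :
    avgUp x y i = avgDown x y i := by
  rw [avgUp_apply, avgDown_apply]
  obtain ⟨k, hk⟩ := h
  omega

theorem apply_eq_avgUp_or_avgDown_of_mem_intNbhd
    (hz : z ∈ intNbhd fun i => ((x i : ℝ) + y i) / 2) (i : Fin n) :
    z i = avgUp x y i ∨ z i = avgDown x y i := by
  obtain ⟨hlower, hupper⟩ := abs_lt.1 (hz i)
  have hlower' : -2 < x i + y i - 2 * z i := by
    have : (-2 : ℝ) < x i + y i - 2 * z i := by linarith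
    exact_mod_cast this
  have hupper' : x i + y i - 2 * z i < 2 := by
    have : (x i + y i - 2 * z i : ℝ) < 2 := by linarith
    exact_mod_cast this
  rw [avgUp_apply, avgDown_apply]
  omega

theorem intNbhd_midpoint_subset (hodd : {i | Odd (x i - y i)}.Subsingleton) :
    intNbhd (fun i => ((x i : ℝ) + y i) / 2) ⊆ {avgUp x y, avgDown x y} := by
  intro z hz
  have hround := apply_eq_avgUp_or_avgDown_of_mem_intNbhd hz
  have heven {i : Fin n} (hi : ¬Odd (x i - y i)) : avgUp x y i = avgDown x y i :=
    avgUp_apply_eq_avgDown_apply (Int.not_odd_iff_even.1 hi)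
  rw [Set.mem_insert_iff, Set.mem_singleton_iff, or_iff_not_imp_left]
  intro hne
  obtain ⟨j, hj⟩ := Function.ne_iff.1 hne
  have hjdown : z j = avgDown x y j := (hround j).resolve_left hj
  have hjodd : Odd (x j - y j) := by
    by_contra h
    exact hj (hjdown.trans (heven h).symm)
  ext i
  by_cases hi : Odd (x i - y i)
  · rwa [hodd hi hjodd]
  · exact (hround i).elim (fun h => h.trans (heven hi)) id

theorem subsingleton_odd_of_even_linf {z : Fin 2 → ℤ} (h : Even (linf z)) :
    {i | Odd (z i)}.Subsingleton := by
  obtain ⟨k, -, hk⟩ :=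
    Finset.univ.exists_mem_eq_sup Finset.univ_nonempty fun i => (z i).natAbs
  have hkeven : ¬Odd (z k) := by
    rw [Int.not_odd_iff_even, ← Int.natAbs_even, ← hk]
    exact h
  have hne {i : Fin 2} (hi : Odd (z i)) : i ≠ k := fun hik => hkeven (hik ▸ hi)
  intro i hi j hj
  have := hne hi
  have := hne hj
  omega

end Rounding

section Envelope

variable {n : ℕ} {f : (Fin n → ℤ) → EReal} {m : Fin n → ℝ}

theorem envelope_intCast_le (f : (Fin n → ℤ) → EReal) (x : Fin n → ℤ) :
    envelope f (fun i => (x i : ℝ)) ≤ f x := by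
  refine sInf_le ⟨{x}, fun _ => 1, ?_, ?_, ?_, ?_, ?_⟩ <;> simp [intNbhd]

theorem le_envelope_of_intNbhd_subset {S : Finset (Fin n → ℤ)} (hS : intNbhd m ⊆ S) {c : EReal}
    (hc : ∀ w : (Fin n → ℤ) → ℝ, (∀ z, 0 ≤ w z) → ∑ z ∈ S, w z = 1 →
      (∀ i, ∑ z ∈ S, w z * (z i : ℝ) = m i) → c ≤ ∑ z ∈ S, (w z : EReal) * f z) :
    c ≤ envelope f m := by
  refine le_sInf ?_
  rintro _ ⟨t, w, ht, hw, hsum, hbary, rfl⟩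
  have htS : t ⊆ S := fun z hz => hS (ht z hz)
  -- Extending the weights by zero is harmless also where `f = ⊤`, since `0 * ⊤ = 0` in `EReal`.
  rw [← Finset.sum_indicator_subset_of_eq_zero w (fun z r => (r : EReal) * f z) htS (by simp)]
  refine hc _ (Set.indicator_nonneg hw) ?_ fun i => ?_
  · rw [Finset.sum_indicator_subset w htS, hsum]
  · rw [Finset.sum_indicator_subset_of_eq_zero w (fun z r => r * (z i : ℝ)) htS (by simp), hbary]

theorem le_envelope_of_intNbhd_subset_pair {p q : Fin n → ℤ} {a b : ℝ} (ha : 0 ≤ a) (hb : 0 ≤ b)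
    (hab : a + b = 1) (hm : ∀ i, m i = a * p i + b * q i) (hN : intNbhd m ⊆ {p, q}) :
    (a : EReal) * f p + (b : EReal) * f q ≤ envelope f m := by
  refine le_envelope_of_intNbhd_subset (S := {p, q}) (by simpa using hN) ?_
  intro w _ hsum hbary
  rcases eq_or_ne p q with rfl | hpq
  · have hwp : w p = a + b := by simpa [hab] using hsum
    rw [← EReal.right_distrib_of_nonneg (by exact_mod_cast ha) (by exact_mod_cast hb),
      ← EReal.coe_add, ← hwp]
    simp
  · obtain ⟨j, hj⟩ := Function.ne_iff.1 hpq
    have hj' : (p j : ℝ) - q j ≠ 0 := sub_ne_zero.2 (by exact_mod_cast hj)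
    have hbaryj := hbary j
    rw [Finset.sum_pair hpq] at hsum hbaryj
    have hwp : w p = a := by
      apply mul_right_cancel₀ hj'
      linear_combination hbaryj + hm j - q j * hsum + q j * hab
    have hwq : w q = b := by linarith
    rw [Finset.sum_pair hpq, hwp, hwq]

theorem IntegrallyConvexFn.envelope_midpoint_le (hf : IntegrallyConvexFn f) (x y : Fin n → ℤ) :
    envelope f (fun i => ((x i : ℝ) + y i) / 2) ≤
      ((1 / 2 : ℝ) : EReal) * f x + ((1 / 2 : ℝ) : EReal) * f y := by
  have hmid : (fun i => ((x i : ℝ) + y i) / 2) =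
      (1 / 2 : ℝ) • (fun i => (x i : ℝ)) + (1 / 2 : ℝ) • fun i => (y i : ℝ) := by
    ext i
    simp only [Pi.add_apply, Pi.smul_apply, smul_eq_mul]
    ring
  rw [hmid]
  refine (hf _ _ _ _ (by norm_num) (by norm_num) (by norm_num)).trans ?_
  gcongr <;> exact envelope_intCast_le f _

end Envelope

theorem le_of_coe_mul_le_coe_mul_left {c : ℝ} (hc : 0 < c) {a b : EReal}
    (h : (c : EReal) * a ≤ c * b) : a ≤ b := by
  have hinv : (0 : EReal) ≤ (c⁻¹ : ℝ) := by exact_mod_cast (inv_pos.2 hc).le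
  simpa only [← mul_assoc, ← EReal.coe_mul, inv_mul_cancel₀ hc.ne', EReal.coe_one, one_mul]
    using mul_le_mul_of_nonneg_left h hinv

theorem IntegrallyConvexFn.dmcPair {n : ℕ} {f : (Fin n → ℤ) → EReal} (hf : IntegrallyConvexFn f)
    {x y : Fin n → ℤ} (hodd : {i | Odd (x i - y i)}.Subsingleton) : DMCPair f x y := by
  have hm (i : Fin n) :
      ((x i : ℝ) + y i) / 2 = 1 / 2 * avgUp x y i + 1 / 2 * avgDown x y i := by
    have : (avgUp x y i : ℝ) + avgDown x y i = x i + y i := by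
      exact_mod_cast avgUp_apply_add_avgDown_apply x y i
    linarith
  have hhalf : (0 : EReal) ≤ ((1 / 2 : ℝ) : EReal) := by positivity
  refine le_of_coe_mul_le_coe_mul_left one_half_pos ?_
  simp only [EReal.left_distrib_of_nonneg_of_ne_top hhalf (EReal.coe_ne_top _)]
  calc ((1 / 2 : ℝ) : EReal) * f (avgUp x y) + ((1 / 2 : ℝ) : EReal) * f (avgDown x y)
      ≤ envelope f (fun i => ((x i : ℝ) + y i) / 2) :=
        le_envelope_of_intNbhd_subset_pair one_half_pos.le one_half_pos.le (add_halves 1) hm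
          (intNbhd_midpoint_subset hodd)
    _ ≤ ((1 / 2 : ℝ) : EReal) * f x + ((1 / 2 : ℝ) : EReal) * f y := hf.envelope_midpoint_le x y

/-- For `n = 2`: every integrally convex function whose effective domain is a
discrete midpoint convex set is locally discrete midpoint convex. -/
theorem integrallyConvex_locallyDMC_dim2 (f : (Fin 2 → ℤ) → EReal)
    (hf : ∀ x, f x ≠ ⊥) (hic : IntegrallyConvexFn f)
    (hdom : DMCSet (effDom f)) :
    LocallyDMC f := by
  refine ⟨hdom, fun x y hxy => hic.dmcPair (subsingleton_odd_of_even_linf (z := x - y) ?_)⟩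
  rw [hxy]
  exact even_two
end

section
/- For a function f : ℤⁿ → ℝ ∪ {+∞}, the following are equivalent: (a) f is integrally convex; (b) for every x, y ∈ dom f with ‖x − y‖∞ ≥ 2, one has f(x) + f(y) ≥ 2·f̃((x+y)/2), where f̃ is the local convex envelope of f. -/
/-! The convex combinations in the definition of `f̃` are points of the convex hull of the graph of
`f`. Given such a point over `x`, enclose the integer points that represent it in a box, and among
all points over `x` of the hull of the graph over the box choose one of least height and, subject
to this, of least mean value of `|z|²`. If two points `y`, `z` of its support had distance at least
two, weak discrete midpoint convexity would allow shifting mass from `y` and `z` to the integral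
neighborhood of their midpoint without raising the height, while strict convexity of `|z|²` lowers
the second coordinate. Hence the support has diameter at most one, so it lies in `N(x)`, and the
height bounds `f̃ x` from above. Thus `f̃` is the full convex envelope of `f`. -/

section ConvexSet

variable {𝕜 ι E : Type*} [Field 𝕜] [LinearOrder 𝕜] [IsStrictOrderedRing 𝕜] [AddCommGroup E]
  [Module 𝕜 E]

theorem exists_pos_weights_of_mem_convexHull_image {v : ι → E} {s : Set ι} {x : E}
    (hx : x ∈ convexHull 𝕜 (v '' s)) :
    ∃ (t : Finset ι) (w : ι → 𝕜), ↑t ⊆ s ∧ (∀ i ∈ t, 0 < w i) ∧ ∑ i ∈ t, w i = 1 ∧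
      ∑ i ∈ t, w i • v i = x := by
  classical
  rw [convexHull_eq_union_convexHull_finite_subsets] at hx
  obtain ⟨p, hps, hxp⟩ := Set.mem_iUnion₂.1 hx
  obtain ⟨w, hw₀, hw₁, hwx⟩ := Finset.mem_convexHull'.1 hxp
  obtain ⟨t, hts, hinj, rfl⟩ := Finset.exists_subset_injOn_image_eq_of_surjOn s p hps
  rw [Finset.sum_image hinj] at hw₁ hwx
  refine ⟨t.filter fun i => w (v i) ≠ 0, w ∘ v,
    fun i hi => hts (Finset.mem_filter.1 hi).1, fun i hi => ?_, ?_, ?_⟩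
  · obtain ⟨hit, hi₀⟩ := Finset.mem_filter.1 hi
    exact (hw₀ _ (Finset.mem_image_of_mem v hit)).lt_of_ne' hi₀
  · rw [← hw₁]
    exact Finset.sum_filter_ne_zero t
  · rw [← hwx]
    exact Finset.sum_filter_of_ne fun i _ h h₀ => h (by simp [h₀])

theorem convex_sum_add_smul_sub_mem {C : Set E} (hC : Convex 𝕜 C) {t : Finset ι} {w : ι → 𝕜}
    {v : ι → E} (hv : ∀ i ∈ t, v i ∈ C) (hw₀ : ∀ i ∈ t, 0 ≤ w i) (hw₁ : ∑ i ∈ t, w i = 1)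
    {j : ι} (hj : j ∈ t) {q : E} (hq : q ∈ C) :
    ∑ i ∈ t, w i • v i + w j • (q - v j) ∈ C := by
  classical
  have hsum : ∑ i ∈ t, w i • Function.update v j q i =
      ∑ i ∈ t, w i • v i + w j • (q - v j) := by
    have herase : ∑ i ∈ t.erase j, w i • Function.update v j q i = ∑ i ∈ t.erase j, w i • v i :=
      Finset.sum_congr rfl fun i hi => by
        rw [Function.update_of_ne (Finset.ne_of_mem_erase hi)]
    rw [← Finset.add_sum_erase t _ hj, ← Finset.add_sum_erase t (fun i => w i • v i) hj, herase,
      Function.update_self]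
    module
  rw [← hsum]
  refine hC.sum_mem hw₀ hw₁ fun i hi => ?_
  rcases eq_or_ne i j with rfl | hij
  · rwa [Function.update_self]
  · rw [Function.update_of_ne hij]
    exact hv i hi

theorem convex_exists_pos_add_smul_add_mem {C : Set E} (hC : Convex 𝕜 C) {x d₁ d₂ : E} {a b : 𝕜}
    (ha : 0 < a) (hb : 0 < b) (h₁ : x + a • d₁ ∈ C) (h₂ : x + b • d₂ ∈ C) :
    ∃ ε : 𝕜, 0 < ε ∧ x + ε • (d₁ + d₂) ∈ C := by
  refine ⟨a * b / (a + b), by positivity, ?_⟩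
  have hcombo : (b / (a + b)) • (x + a • d₁) + (a / (a + b)) • (x + b • d₂) =
      x + (a * b / (a + b)) • (d₁ + d₂) := by
    match_scalars <;> field_simp
    ring
  rw [← hcombo]
  exact hC h₁ h₂ (by positivity) (by positivity) (by field_simp; ring)

end ConvexSet

section Compact

theorem isCompact_exists_forall_toLex_le {α β : Type*} [LinearOrder α] [TopologicalSpace α]
    [OrderClosedTopology α] [LinearOrder β] [TopologicalSpace β] [ClosedIicTopology β]
    {K : Set (α × β)} (hK : IsCompact K) (hne : K.Nonempty) :
    ∃ p ∈ K, ∀ q ∈ K, toLex p ≤ toLex q := by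
  obtain ⟨m, hm, hmin⟩ := hK.exists_isMinOn hne continuous_fst.continuousOn
  have hface : IsCompact (K ∩ Prod.fst ⁻¹' {m.1}) :=
    hK.inter_right (isClosed_singleton.preimage continuous_fst)
  obtain ⟨p, ⟨hp, hpm⟩, hpmin⟩ :=
    hface.exists_isMinOn ⟨m, hm, rfl⟩ continuous_snd.continuousOn
  refine ⟨p, hp, fun q hq => Prod.Lex.toLex_le_toLex.2 ?_⟩
  rcases (hmin hq).lt_or_eq with hlt | heq
  · exact Or.inl (hpm.trans_lt hlt)
  · exact Or.inr ⟨hpm.trans heq, hpmin ⟨hq, heq.symm⟩⟩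

theorem isCompact_exists_fiber_forall_toLex_le {E α β : Type*} [TopologicalSpace E] [T1Space E]
    [LinearOrder α] [TopologicalSpace α] [OrderClosedTopology α] [LinearOrder β]
    [TopologicalSpace β] [ClosedIicTopology β] {K : Set (E × α × β)} (hK : IsCompact K)
    {x : E} {c : α × β} (hc : (x, c) ∈ K) :
    ∃ p, (x, p) ∈ K ∧ ∀ q, (x, q) ∈ K → toLex p ≤ toLex q := by
  have hfiber : IsCompact (Prod.snd '' (K ∩ Prod.fst ⁻¹' {x})) :=
    (hK.inter_right (isClosed_singleton.preimage continuous_fst)).image continuous_snd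
  obtain ⟨_, ⟨⟨_, p⟩, ⟨hp, rfl⟩, rfl⟩, hmin⟩ :=
    isCompact_exists_forall_toLex_le hfiber ⟨c, (x, c), ⟨hc, rfl⟩, rfl⟩
  exact ⟨p, hp, fun q hq => hmin q ⟨_, ⟨hq, rfl⟩, rfl⟩⟩

end Compact

section ExtendedReal

variable {ι : Type*} {s : Finset ι} {g : ι → EReal}

theorem ereal_sum_ne_bot (h : ∀ i ∈ s, g i ≠ ⊥) : ∑ i ∈ s, g i ≠ ⊥ :=
  Finset.sum_induction g (· ≠ ⊥) (fun _ _ ha hb => EReal.add_ne_bot_iff.2 ⟨ha, hb⟩)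
    EReal.zero_ne_bot h

theorem ereal_ne_top_of_sum_ne_top (h : ∀ i ∈ s, g i ≠ ⊥) (hs : ∑ i ∈ s, g i ≠ ⊤) :
    ∀ i ∈ s, g i ≠ ⊤ := by
  classical
  intro i hi
  rw [← Finset.add_sum_erase s g hi, EReal.add_ne_top_iff_ne_top₂ (h i hi)
    (ereal_sum_ne_bot fun j hj => h j (Finset.mem_of_mem_erase hj))] at hs
  exact hs.1

theorem ereal_coe_sum (w : ι → ℝ) : ((∑ i ∈ s, w i : ℝ) : EReal) = ∑ i ∈ s, (w i : EReal) := by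
  classical
  induction s using Finset.induction_on with
  | empty => simp
  | insert a s ha ih => rw [Finset.sum_insert ha, Finset.sum_insert ha, EReal.coe_add, ih]

end ExtendedReal

section

variable {n : ℕ}

section Lattice

/-- The integer point `z` as a point of `ℝⁿ`. -/
def realPoint (z : Fin n → ℤ) : Fin n → ℝ := fun i => z i

/-- The midpoint `(y + z) / 2` of two integer points, as a point of `ℝⁿ`. -/
noncomputable def midpt (y z : Fin n → ℤ) : Fin n → ℝ := fun i => ((y i : ℝ) + (z i : ℝ)) / 2

theorem two_le_linf_iff {z : Fin n → ℤ} : 2 ≤ linf z ↔ ∃ i, 2 ≤ (z i).natAbs := by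
  simp only [linf, Finset.le_sup_iff (show (⊥ : ℕ) < 2 by decide), Finset.mem_univ, true_and]

theorem intNbhd_subset_Icc (x : Fin n → ℝ) :
    intNbhd x ⊆ Set.Icc (fun i => ⌊x i⌋) fun i => ⌈x i⌉ := by
  refine fun z hz => ⟨fun i => ?_, fun i => ?_⟩
  · exact Int.lt_add_one_iff.1 (Int.floor_lt.2 (by push_cast; linarith [abs_lt.1 (hz i)]))
  · exact Int.sub_one_lt_iff.1 (Int.lt_ceil.2 (by push_cast; linarith [abs_lt.1 (hz i)]))

theorem intNbhd_finite (x : Fin n → ℝ) : (intNbhd x).Finite :=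
  (Set.finite_Icc _ _).subset (intNbhd_subset_Icc x)

theorem two_mul_lt_of_mem_intNbhd_midpt {y z u : Fin n → ℤ} (hu : u ∈ intNbhd (midpt y z))
    (i : Fin n) : y i + z i < 2 * u i + 2 ∧ 2 * u i < y i + z i + 2 := by
  have h := abs_lt.1 (hu i)
  simp only [midpt] at h
  rify
  constructor <;> linarith

theorem intNbhd_midpt_subset_Icc {l h y z : Fin n → ℤ} (hy : y ∈ Set.Icc l h)
    (hz : z ∈ Set.Icc l h) : intNbhd (midpt y z) ⊆ Set.Icc l h := fun u hu => by
  refine ⟨fun i => ?_, fun i => ?_⟩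
  · have : l i ≤ y i := hy.1 i
    have : l i ≤ z i := hz.1 i
    have := two_mul_lt_of_mem_intNbhd_midpt hu i
    change l i ≤ u i
    omega
  · have : y i ≤ h i := hy.2 i
    have : z i ≤ h i := hz.2 i
    have := two_mul_lt_of_mem_intNbhd_midpt hu i
    change u i ≤ h i
    omega

theorem dotProduct_sub_sub_neg_of_mem_intNbhd_midpt {y z u : Fin n → ℤ}
    (hyz : 2 ≤ linf (y - z)) (hu : u ∈ intNbhd (midpt y z)) : (u - y) ⬝ᵥ (u - z) < 0 := by
  have hle : ∀ i, (u i - y i) * (u i - z i) ≤ 0 := fun i => by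
    obtain ⟨h₁, h₂⟩ := two_mul_lt_of_mem_intNbhd_midpt hu i
    rcases le_total (y i) (z i) with h | h
    · exact mul_nonpos_of_nonneg_of_nonpos (by omega) (by omega)
    · exact mul_nonpos_of_nonpos_of_nonneg (by omega) (by omega)
  obtain ⟨j, hj⟩ := two_le_linf_iff.1 hyz
  have hlt : (u j - y j) * (u j - z j) < 0 := by
    obtain ⟨h₁, h₂⟩ := two_mul_lt_of_mem_intNbhd_midpt hu j
    rw [Pi.sub_apply] at hj
    rcases le_total (y j) (z j) with h | h
    · exact mul_neg_of_pos_of_neg (by omega) (by omega)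
    · exact mul_neg_of_neg_of_pos (by omega) (by omega)
  exact Finset.sum_neg' (fun i _ => hle i) ⟨j, Finset.mem_univ j, hlt⟩

theorem mem_intNbhd_of_pairwise_linf_lt_two {t : Finset (Fin n → ℤ)} {w : (Fin n → ℤ) → ℝ}
    {x : Fin n → ℝ} (hw₀ : ∀ z ∈ t, 0 < w z) (hw₁ : ∑ z ∈ t, w z = 1)
    (hx : ∑ z ∈ t, w z • realPoint z = x) (ht : ∀ y ∈ t, ∀ z ∈ t, linf (y - z) < 2)
    {z : Fin n → ℤ} (hz : z ∈ t) : z ∈ intNbhd x := by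
  intro i
  have hdiff : x i - z i = ∑ u ∈ t, w u * ((u i : ℝ) - z i) := by
    simp only [← hx, Finset.sum_apply, Pi.smul_apply, realPoint, smul_eq_mul, mul_sub,
      Finset.sum_sub_distrib, ← Finset.sum_mul, hw₁, one_mul]
  have hclose : ∀ u ∈ t, |(u i : ℝ) - z i| ≤ 1 := fun u hu => by
    have h := mt two_le_linf_iff.2 (ht u hu z hz).not_ge
    have hi : |u i - z i| ≤ 1 := by
      rw [Int.abs_eq_natAbs]
      exact_mod_cast Nat.lt_succ_iff.1 (not_le.1 (not_exists.1 h i))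
    exact_mod_cast hi
  calc |x i - z i| ≤ ∑ u ∈ t, |w u * ((u i : ℝ) - z i)| :=
        hdiff ▸ Finset.abs_sum_le_sum_abs _ _
    _ < ∑ u ∈ t, w u := by
        refine Finset.sum_lt_sum (fun u hu => ?_) ⟨z, hz, by simpa using hw₀ z hz⟩
        rw [abs_mul, abs_of_pos (hw₀ u hu)]
        exact mul_le_of_le_one_right (hw₀ u hu).le (hclose u hu)
    _ = 1 := hw₁

end Lattice

section LiftedGraph

variable {f : (Fin n → ℤ) → EReal}

/-- The point `(z, f z, |z|²)`: the graph of `f`, with the squared Euclidean norm as an additional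
coordinate that serves as the tie-breaking objective among convex combinations of equal height.
The second coordinate is meaningful for `z` in the effective domain only. -/
noncomputable def liftPoint (f : (Fin n → ℤ) → EReal) (z : Fin n → ℤ) : (Fin n → ℝ) × ℝ × ℝ :=
  (realPoint z, (f z).toReal, realPoint z ⬝ᵥ realPoint z)

/-- The convex hull of the lifted graph of `f` over a set `s` of integer points. -/
noncomputable def liftHull (f : (Fin n → ℤ) → EReal) (s : Set (Fin n → ℤ)) :
    Set ((Fin n → ℝ) × ℝ × ℝ) :=
  convexHull ℝ (liftPoint f '' s)

theorem liftHull_mono {s t : Set (Fin n → ℤ)} (hst : s ⊆ t) : liftHull f s ⊆ liftHull f t :=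
  convexHull_mono (Set.image_mono hst)

theorem liftPoint_mem_liftHull {s : Set (Fin n → ℤ)} {z : Fin n → ℤ} (hz : z ∈ s) :
    liftPoint f z ∈ liftHull f s :=
  subset_convexHull ℝ _ (Set.mem_image_of_mem _ hz)

theorem isCompact_liftHull {s : Set (Fin n → ℤ)} (hs : s.Finite) : IsCompact (liftHull f s) :=
  (hs.image _).isCompact_convexHull ℝ

theorem sum_smul_liftPoint (t : Finset (Fin n → ℤ)) (w : (Fin n → ℤ) → ℝ) :
    ∑ z ∈ t, w z • liftPoint f z = (∑ z ∈ t, w z • realPoint z, ∑ z ∈ t, w z * (f z).toReal,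
      ∑ z ∈ t, w z * (realPoint z ⬝ᵥ realPoint z)) := by
  simp only [liftPoint, Prod.smul_mk, smul_eq_mul, Prod.ext_iff, Prod.fst_sum, Prod.snd_sum,
    and_self]

-- On the integral neighborhood of the midpoint `(u - y) ⬝ᵥ (u - z) < 0`, which is an affine
-- inequality in `(u, |u|²)` and so persists on the convex hull.
theorem two_mul_lt_of_mem_liftHull_intNbhd_midpt {y z : Fin n → ℤ} (hyz : 2 ≤ linf (y - z))
    {r s : ℝ} (h : (midpt y z, r, s) ∈ liftHull f (intNbhd (midpt y z))) :
    2 * s < realPoint y ⬝ᵥ realPoint y + realPoint z ⬝ᵥ realPoint z := by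
  set c := realPoint y + realPoint z with hc
  have hlin : IsLinearMap ℝ fun p : (Fin n → ℝ) × ℝ × ℝ => p.2.2 - c ⬝ᵥ p.1 :=
    ⟨fun p q => by simp only [Prod.fst_add, Prod.snd_add, dotProduct_add]; ring,
      fun a p => by simp only [Prod.smul_fst, Prod.smul_snd, dotProduct_smul, smul_eq_mul]; ring⟩
  have hsub : liftHull f (intNbhd (midpt y z)) ⊆
      {p | p.2.2 - c ⬝ᵥ p.1 < -(realPoint y ⬝ᵥ realPoint z)} := by
    refine convexHull_min ?_ (convex_halfSpace_lt hlin _)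
    rintro _ ⟨u, hu, rfl⟩
    have hneg : (realPoint u - realPoint y) ⬝ᵥ (realPoint u - realPoint z) < 0 := by
      have := dotProduct_sub_sub_neg_of_mem_intNbhd_midpt hyz hu
      simp only [dotProduct, Pi.sub_apply, realPoint] at this ⊢
      exact_mod_cast this
    simp only [sub_dotProduct, dotProduct_sub, dotProduct_comm (realPoint u) (realPoint z)] at hneg
    simp only [liftPoint, hc, add_dotProduct, Set.mem_ofPred_eq]
    linarith
  have hmid : midpt y z = (2⁻¹ : ℝ) • c := by
    ext i
    simp only [midpt, hc, Pi.smul_apply, Pi.add_apply, realPoint, smul_eq_mul]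
    ring
  have hlt : s - c ⬝ᵥ midpt y z < -(realPoint y ⬝ᵥ realPoint z) := hsub h
  simp only [hmid, hc, dotProduct_smul, add_dotProduct, dotProduct_add, smul_eq_mul,
    dotProduct_comm (realPoint z) (realPoint y)] at hlt
  linarith

end LiftedGraph

section Envelope

variable {f : (Fin n → ℤ) → EReal}

theorem coe_sum_mul_toReal (hf : ∀ x, f x ≠ ⊥) {t : Finset (Fin n → ℤ)} (ht : ↑t ⊆ effDom f)
    (w : (Fin n → ℤ) → ℝ) :
    ((∑ z ∈ t, w z * (f z).toReal : ℝ) : EReal) = ∑ z ∈ t, (w z : EReal) * f z := by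
  rw [ereal_coe_sum]
  exact Finset.sum_congr rfl fun z hz => by
    rw [EReal.coe_mul, EReal.coe_toReal (ht hz) (hf z)]

theorem envelope_le_of_mem_liftHull (hf : ∀ x, f x ≠ ⊥) {x : Fin n → ℝ} {r s : ℝ}
    (h : (x, r, s) ∈ liftHull f (effDom f ∩ intNbhd x)) : envelope f x ≤ r := by
  obtain ⟨t, w, ht, hw₀, hw₁, hsum⟩ := exists_pos_weights_of_mem_convexHull_image h
  simp only [sum_smul_liftPoint, Prod.mk.injEq] at hsum
  obtain ⟨hx, rfl, -⟩ := hsum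
  refine sInf_le ⟨t, w, fun z hz => (ht hz).2, fun z hz => (hw₀ z hz).le, hw₁, fun i => ?_,
    coe_sum_mul_toReal hf (fun z hz => (ht hz).1) w⟩
  simp only [← hx, Finset.sum_apply, Pi.smul_apply, realPoint, smul_eq_mul]

theorem exists_mem_liftHull_lt_of_envelope_lt (hf : ∀ x, f x ≠ ⊥) {x : Fin n → ℝ} {c : EReal}
    (h : envelope f x < c) :
    ∃ r s : ℝ, (x, r, s) ∈ liftHull f (effDom f ∩ intNbhd x) ∧ (r : EReal) < c := by
  classical
  obtain ⟨_, ⟨t, w, hN, hw₀, hw₁, hx, rfl⟩, hlt⟩ := sInf_lt_iff.1 h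
  have hbot : ∀ z ∈ t, (w z : EReal) * f z ≠ ⊥ := fun z hz => by
    simp [EReal.mul_ne_bot, hf z, hw₀ z hz]
  have hzero : ∀ z ∈ t, w z ≠ 0 → z ∈ effDom f := fun z hz hne htop =>
    ereal_ne_top_of_sum_ne_top hbot (hlt.trans_le le_top).ne z hz <| by
      rw [htop, EReal.coe_mul_top_of_pos ((hw₀ z hz).lt_of_ne' hne)]
  set t' := t.filter fun z => z ∈ effDom f
  have hdom : ↑t' ⊆ effDom f := fun z hz => (Finset.mem_filter.1 hz).2
  have hsum {M : Type} [AddCommMonoid M] (g : (Fin n → ℤ) → M) (hg : ∀ z, w z = 0 → g z = 0) :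
      ∑ z ∈ t', g z = ∑ z ∈ t, g z :=
    Finset.sum_filter_of_ne fun z hz hne => hzero z hz (mt (hg z) hne)
  have hmem : ∑ z ∈ t', w z • liftPoint f z ∈ liftHull f (effDom f ∩ intNbhd x) :=
    (convex_convexHull ℝ _).sum_mem (fun z hz => hw₀ z (Finset.mem_filter.1 hz).1)
      ((hsum w fun _ h => h).trans hw₁)
      fun z hz => liftPoint_mem_liftHull ⟨hdom hz, hN z (Finset.mem_filter.1 hz).1⟩
  have hbary : ∑ z ∈ t', w z • realPoint z = x := by
    rw [hsum _ fun z h => by rw [h, zero_smul]]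
    ext i
    simp only [← hx i, Finset.sum_apply, Pi.smul_apply, realPoint, smul_eq_mul]
  rw [sum_smul_liftPoint, hbary] at hmem
  refine ⟨_, _, hmem, ?_⟩
  rwa [coe_sum_mul_toReal hf hdom, hsum _ fun z h => by rw [h, EReal.coe_zero, zero_mul]]

theorem exists_mem_liftHull_envelope_eq (hf : ∀ x, f x ≠ ⊥) {x : Fin n → ℝ}
    (h : envelope f x ≠ ⊤) :
    ∃ r s : ℝ, (x, r, s) ∈ liftHull f (effDom f ∩ intNbhd x) ∧ envelope f x = r := by
  have hcompact := isCompact_liftHull (f := f) ((intNbhd_finite x).inter_of_right (effDom f))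
  obtain ⟨_, _, hmem, -⟩ := exists_mem_liftHull_lt_of_envelope_lt hf h.lt_top
  obtain ⟨⟨r, s⟩, hrs, hmin⟩ := isCompact_exists_fiber_forall_toLex_le hcompact hmem
  refine ⟨r, s, hrs, (envelope_le_of_mem_liftHull hf hrs).antisymm (le_of_not_gt fun hlt => ?_)⟩
  obtain ⟨r', s', hmem', hlt'⟩ := exists_mem_liftHull_lt_of_envelope_lt hf hlt
  exact (Prod.Lex.monotone_fst _ _ (hmin _ hmem')).not_gt (EReal.coe_lt_coe_iff.1 hlt')

theorem envelope_ne_bot (hf : ∀ x, f x ≠ ⊥) (x : Fin n → ℝ) : envelope f x ≠ ⊥ := fun hbot => by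
  obtain ⟨r, _, -, hr⟩ := exists_mem_liftHull_envelope_eq hf (hbot ▸ bot_ne_top)
  exact EReal.coe_ne_bot r (hr.symm.trans hbot)

theorem envelope_realPoint_le (f : (Fin n → ℤ) → EReal) (x : Fin n → ℤ) :
    envelope f (realPoint x) ≤ f x :=
  sInf_le ⟨{x}, fun _ => 1, by simp [intNbhd, realPoint], by simp, by simp,
    by simp [realPoint], by simp⟩

end Envelope

section WeakDMC

variable {f : (Fin n → ℤ) → EReal}

/-- Weak discrete midpoint convexity of `f`: the value of the local convex envelope at the midpoint
of two points of the effective domain at `ℓ∞`-distance at least two is at most the mean of the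
values of `f`. -/
def WeakDMC (f : (Fin n → ℤ) → EReal) : Prop :=
  ∀ x y : Fin n → ℤ, x ∈ effDom f → y ∈ effDom f → 2 ≤ linf (x - y) →
    (2 : EReal) * envelope f (midpt x y) ≤ f x + f y

theorem WeakDMC.exists_mem_liftHull_midpt (hf : ∀ x, f x ≠ ⊥) (h : WeakDMC f) {y z : Fin n → ℤ}
    (hy : y ∈ effDom f) (hz : z ∈ effDom f) (hyz : 2 ≤ linf (y - z)) :
    ∃ r s : ℝ, (midpt y z, r, s) ∈ liftHull f (effDom f ∩ intNbhd (midpt y z)) ∧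
      2 * r ≤ (f y).toReal + (f z).toReal := by
  have hle := h y z hy hz hyz
  rw [← EReal.coe_toReal hy (hf y), ← EReal.coe_toReal hz (hf z), ← EReal.coe_add] at hle
  have hfin : envelope f (midpt y z) ≠ ⊤ := fun htop => by
    rw [htop, EReal.mul_top_of_pos (by norm_num)] at hle
    exact EReal.coe_ne_top _ (top_le_iff.1 hle)
  obtain ⟨r, s, hmem, hr⟩ := exists_mem_liftHull_envelope_eq hf hfin
  rw [hr, show (2 : EReal) = ((2 : ℝ) : EReal) from rfl] at hle
  exact ⟨r, s, hmem, by exact_mod_cast hle⟩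

theorem WeakDMC.linf_sub_lt_two_of_forall_toLex_le (hf : ∀ x, f x ≠ ⊥) (h : WeakDMC f)
    {T : Set (Fin n → ℤ)} (hT : T ⊆ effDom f)
    (hmid : ∀ y ∈ T, ∀ z ∈ T, effDom f ∩ intNbhd (midpt y z) ⊆ T)
    {t : Finset (Fin n → ℤ)} {w : (Fin n → ℤ) → ℝ} (ht : ↑t ⊆ T) (hw₀ : ∀ z ∈ t, 0 < w z)
    (hw₁ : ∑ z ∈ t, w z = 1) {x : Fin n → ℝ} {p : ℝ × ℝ}
    (hp : ∑ z ∈ t, w z • liftPoint f z = (x, p))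
    (hmin : ∀ q, (x, q) ∈ liftHull f T → toLex p ≤ toLex q) :
    ∀ y ∈ t, ∀ z ∈ t, linf (y - z) < 2 := by
  by_contra! hfar
  obtain ⟨y, hy, z, hz, hyz⟩ := hfar
  obtain ⟨r, s, hq, hr⟩ := h.exists_mem_liftHull_midpt hf (hT (ht hy)) (hT (ht hz)) hyz
  have hs := two_mul_lt_of_mem_liftHull_intNbhd_midpt hyz (liftHull_mono Set.inter_subset_right hq)
  have hqT := liftHull_mono (hmid y (ht hy) z (ht hz)) hq
  have hconv : Convex ℝ (liftHull f T) := convex_convexHull ℝ _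
  have hshift : ∀ u ∈ t, (x, p) + w u • ((midpt y z, r, s) - liftPoint f u) ∈ liftHull f T :=
    fun u hu => hp ▸ convex_sum_add_smul_sub_mem hconv (fun v hv => liftPoint_mem_liftHull (ht hv))
      (fun v hv => (hw₀ v hv).le) hw₁ hu hqT
  obtain ⟨ε, hε, hmem⟩ := convex_exists_pos_add_smul_add_mem hconv (hw₀ y hy)
    (hw₀ z hz) (hshift y hy) (hshift z hz)
  have hfst : midpt y z - realPoint y + (midpt y z - realPoint z) = 0 := by
    ext i
    simp only [midpt, realPoint, Pi.add_apply, Pi.sub_apply, Pi.zero_apply]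
    ring
  obtain ⟨r₀, s₀⟩ := p
  simp only [liftPoint, Prod.mk_sub_mk, Prod.mk_add_mk, Prod.smul_mk, hfst, smul_zero, add_zero,
    smul_eq_mul] at hmem
  have hheight : ε * (r - (f y).toReal + (r - (f z).toReal)) ≤ 0 :=
    mul_nonpos_of_nonneg_of_nonpos hε.le (by linarith)
  have htie : ε * (s - realPoint y ⬝ᵥ realPoint y + (s - realPoint z ⬝ᵥ realPoint z)) < 0 :=
    mul_neg_of_pos_of_neg hε (by linarith)
  rcases Prod.Lex.toLex_le_toLex.1 (hmin _ hmem) with hlt | ⟨-, hle⟩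
  · exact hlt.not_ge (add_le_of_nonpos_right hheight)
  · exact hle.not_gt (add_lt_of_neg_right _ htie)

theorem WeakDMC.envelope_le_of_mem_liftHull_effDom (hf : ∀ x, f x ≠ ⊥) (h : WeakDMC f)
    {x : Fin n → ℝ} {r s : ℝ} (hmem : (x, r, s) ∈ liftHull f (effDom f)) : envelope f x ≤ r := by
  obtain ⟨t₀, w₀, ht₀, hw₀, hw₁, hsum₀⟩ := exists_pos_weights_of_mem_convexHull_image hmem
  obtain ⟨l, hl⟩ := t₀.finite_toSet.bddBelow
  obtain ⟨u, hu⟩ := t₀.finite_toSet.bddAbove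
  set T := effDom f ∩ Set.Icc l u
  have hmemT : (x, r, s) ∈ liftHull f T := hsum₀ ▸
    (convex_convexHull ℝ _).sum_mem (fun z hz => (hw₀ z hz).le) hw₁
      fun z hz => liftPoint_mem_liftHull ⟨ht₀ hz, hl hz, hu hz⟩
  have hcompact := isCompact_liftHull (f := f) ((Set.finite_Icc l u).inter_of_right (effDom f))
  obtain ⟨p, hp, hmin⟩ := isCompact_exists_fiber_forall_toLex_le hcompact hmemT
  obtain ⟨t, w, ht, hw, hw_sum, hsum⟩ := exists_pos_weights_of_mem_convexHull_image hp
  have hclose := h.linf_sub_lt_two_of_forall_toLex_le hf Set.inter_subset_left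
    (fun y hy z hz => Set.inter_subset_inter_right _ (intNbhd_midpt_subset_Icc hy.2 hz.2))
    ht hw hw_sum hsum hmin
  have hbary : ∑ z ∈ t, w z • realPoint z = x := by
    rw [sum_smul_liftPoint] at hsum
    exact congrArg Prod.fst hsum
  have hlocal : (x, p) ∈ liftHull f (effDom f ∩ intNbhd x) := hsum ▸
    (convex_convexHull ℝ _).sum_mem (fun z hz => (hw z hz).le) hw_sum fun z hz =>
      liftPoint_mem_liftHull
        ⟨(ht hz).1, mem_intNbhd_of_pairwise_linf_lt_two hw hw_sum hbary hclose hz⟩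
  exact (envelope_le_of_mem_liftHull hf hlocal).trans
    (EReal.coe_le_coe_iff.2 (Prod.Lex.monotone_fst _ _ (hmin _ hmemT)))

theorem WeakDMC.integrallyConvexFn (hf : ∀ x, f x ≠ ⊥) (h : WeakDMC f) :
    IntegrallyConvexFn f := by
  intro u v a b ha hb hab
  rcases ha.eq_or_lt with rfl | ha'
  · obtain rfl : b = 1 := by linarith
    simp
  rcases hb.eq_or_lt with rfl | hb'
  · obtain rfl : a = 1 := by linarith
    simp
  by_cases hu : envelope f u = ⊤
  · rw [hu, EReal.coe_mul_top_of_pos ha', EReal.top_add_of_ne_bot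
      (by simp [EReal.mul_ne_bot, envelope_ne_bot hf v, hb])]
    exact le_top
  by_cases hv : envelope f v = ⊤
  · rw [hv, EReal.coe_mul_top_of_pos hb', EReal.add_top_of_ne_bot
      (by simp [EReal.mul_ne_bot, envelope_ne_bot hf u, ha])]
    exact le_top
  obtain ⟨r₁, s₁, h₁, hr₁⟩ := exists_mem_liftHull_envelope_eq hf hu
  obtain ⟨r₂, s₂, h₂, hr₂⟩ := exists_mem_liftHull_envelope_eq hf hv
  have hmem : (a • u + b • v, a * r₁ + b * r₂, a * s₁ + b * s₂) ∈ liftHull f (effDom f) :=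
    convex_convexHull ℝ _ (liftHull_mono Set.inter_subset_left h₁)
      (liftHull_mono Set.inter_subset_left h₂) ha hb hab
  rw [hr₁, hr₂]
  exact_mod_cast h.envelope_le_of_mem_liftHull_effDom hf hmem

theorem IntegrallyConvexFn.weakDMC (hf : ∀ x, f x ≠ ⊥) (h : IntegrallyConvexFn f) :
    WeakDMC f := by
  intro x y hx hy _
  have hmid : midpt x y = (1 / 2 : ℝ) • realPoint x + (1 / 2 : ℝ) • realPoint y := by
    ext i
    simp only [midpt, realPoint, Pi.add_apply, Pi.smul_apply, smul_eq_mul]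
    ring
  have hhalf : (0 : EReal) ≤ ((1 / 2 : ℝ) : EReal) := EReal.coe_nonneg.2 (by norm_num)
  calc (2 : EReal) * envelope f (midpt x y)
      ≤ 2 * (((1 / 2 : ℝ) : EReal) * envelope f (realPoint x) +
          ((1 / 2 : ℝ) : EReal) * envelope f (realPoint y)) := by
        rw [hmid]
        exact mul_le_mul_of_nonneg_left
          (h _ _ _ _ (by norm_num) (by norm_num) (by norm_num)) (by norm_num)
    _ ≤ 2 * (((1 / 2 : ℝ) : EReal) * f x + ((1 / 2 : ℝ) : EReal) * f y) := by
        exact mul_le_mul_of_nonneg_left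
          (add_le_add (mul_le_mul_of_nonneg_left (envelope_realPoint_le f x) hhalf)
            (mul_le_mul_of_nonneg_left (envelope_realPoint_le f y) hhalf)) (by norm_num)
    _ = f x + f y := by
        rw [← EReal.coe_toReal hx (hf x), ← EReal.coe_toReal hy (hf y),
          show (2 : EReal) = ((2 : ℝ) : EReal) from rfl]
        norm_cast
        ring

end WeakDMC

end

/-- A function `f : ℤⁿ → ℝ ∪ {+∞}` is integrally convex if and only if it
satisfies weak discrete midpoint convexity
`f(x) + f(y) ≥ 2·f̃((x+y)/2)` for all `x, y ∈ dom f` with `‖x − y‖∞ ≥ 2`. -/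
theorem integrallyConvex_iff_global_weakDMC {n : ℕ}
    (f : (Fin n → ℤ) → EReal) (hf : ∀ x, f x ≠ ⊥) :
    IntegrallyConvexFn f ↔
      ∀ x y : Fin n → ℤ, x ∈ effDom f → y ∈ effDom f → 2 ≤ linf (x - y) →
        (2 : EReal) * envelope f (fun i => ((x i : ℝ) + (y i : ℝ)) / 2) ≤
          f x + f y :=
  ⟨fun h => h.weakDMC hf, WeakDMC.integrallyConvexFn hf⟩
end
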